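/- For every γ ∈ (0,1) there exists a potential q* ∈ A_γ such that λ₁(q*) = m_γ; that is, the infimum m_γ of the first eigenvalues λ₁(q) over q ∈ A_γ is attained. -/

import Mathlib

open MeasureTheory Set Real

noncomputable section

/-- Pairs `(y, y')` representing a function of Sobolev class `W¹₂[0,1]`:
`y` is absolutely continuous on `[0,1]` (being an integral of `y'`)
with derivative `y'` belonging to `L²[0,1]`. -/
def W12 : Set ((ℝ → ℝ) × (ℝ → ℝ)) :=
  {p | (∀ x ∈ Icc (0:ℝ) 1, p.1 x = p.1 0 + ∫ t in (0:ℝ)..x, p.2 t) ∧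
    IntervalIntegrable p.2 volume 0 1 ∧
    IntervalIntegrable (fun t => (p.2 t) ^ 2) volume 0 1}

/-- The Rayleigh quotient `(∫₀¹ ((y')² + q y²) dx) / (∫₀¹ y² dx)`. -/
def Rayleigh (q : ℝ → ℝ) (p : (ℝ → ℝ) × (ℝ → ℝ)) : ℝ :=
  (∫ t in (0:ℝ)..1, ((p.2 t) ^ 2 + q t * (p.1 t) ^ 2)) /
    ∫ t in (0:ℝ)..1, (p.1 t) ^ 2

/-- The smallest eigenvalue `λ₁(q)` of the Neumann problem `-y'' + q y = λ y`,
`y'(0) = y'(1) = 0`, defined as the infimum of Rayleigh quotients over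
nonzero `y ∈ W¹₂[0,1]`. -/
def lambda1 (q : ℝ → ℝ) : ℝ :=
  sInf {r | ∃ p ∈ W12, 0 < (∫ t in (0:ℝ)..1, (p.1 t) ^ 2) ∧ r = Rayleigh q p}

/-- The class `A_γ` of potentials: `q ∈ L¹[0,1]`, `q ≥ 0` a.e. on `[0,1]`,
`∫₀¹ q^γ dx = 1`. -/
def Agamma (γ : ℝ) : Set (ℝ → ℝ) :=
  {q | IntervalIntegrable q volume 0 1 ∧
    (∀ᵐ t ∂(volume.restrict (Icc (0:ℝ) 1)), 0 ≤ q t) ∧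
    (∫ t in (0:ℝ)..1, q t ^ γ) = 1}

/-- `m_γ := inf_{q ∈ A_γ} λ₁(q)`. -/
def mGamma (γ : ℝ) : ℝ := sInf (lambda1 '' Agamma γ)

/-- The set `M` of uniformly positive functions of class `W¹₂[0,1]`. -/
def Mset : Set ((ℝ → ℝ) × (ℝ → ℝ)) :=
  {p ∈ W12 | ∃ ζ > (0:ℝ), ∀ x ∈ Icc (0:ℝ) 1, ζ ≤ p.1 x}

/-- `J_γ(y) := ∫₀¹ (y')² dx + (∫₀¹ y^{2γ/(γ−1)} dx)^{(γ−1)/γ}`. -/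
def Jg (γ : ℝ) (p : (ℝ → ℝ) × (ℝ → ℝ)) : ℝ :=
  (∫ t in (0:ℝ)..1, (p.2 t) ^ 2) +
    (∫ t in (0:ℝ)..1, (p.1 t) ^ (2 * γ / (γ - 1))) ^ ((γ - 1) / γ)

/-- `G_γ(y) := J_γ(y) / ∫₀¹ y² dx`. -/
def Gg (γ : ℝ) (p : (ℝ → ℝ) × (ℝ → ℝ)) : ℝ :=
  Jg γ p / ∫ t in (0:ℝ)..1, (p.1 t) ^ 2

/-!
For `y > 0` and `q ∈ A_γ`, reverse Hölder gives `∫ q y² ≥ (∫ y ^ (2γ/(γ-1))) ^ ((γ-1)/γ)`, with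
equality for `q` proportional to `y ^ (2/(γ-1))`. Hence `Gg γ y ≤ Rayleigh q y`, with equality at
the dual potential of `y`. A function with a zero is harmless: it satisfies `∫ y² ≤ ½ ∫ y'²`, so its
Rayleigh quotient is at least `2`, while `Gg γ 1 = 1`. The dual potential of a minimiser of `Gg γ`
therefore attains the infimum.

To minimise `Gg γ`, normalise a minimising sequence by `∫ y² = 1`. Eventually `∫ y'²` is at most
slightly above `1`, and `|y - 1| ≤ √(½ ∫ y'²)` confines `y` to a compact subinterval of `(0, ∞)`.
Along a subsequence the derivatives converge weakly in `L²` and the functions pointwise; `∫ y'²` is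
weakly lower semicontinuous and the other integrals converge by dominated convergence.
-/

open Filter Topology
open scoped InnerProductSpace

theorem forall_pos_or_forall_neg_of_isPreconnected {X : Type*} [TopologicalSpace X] {s : Set X}
    (hs : IsPreconnected s) {f : X → ℝ} (hf : ContinuousOn f s) (h0 : ∀ x ∈ s, f x ≠ 0) :
    (∀ x ∈ s, 0 < f x) ∨ ∀ x ∈ s, f x < 0 := by
  by_contra! h
  obtain ⟨⟨x, hx, hfx⟩, z, hz, hfz⟩ := h
  obtain ⟨c, hcs, hc⟩ := hs.intermediate_value hx hz hf ⟨hfx, hfz⟩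
  exact h0 c hcs hc

section MeanInequalities

variable {α : Type*} [MeasurableSpace α] {μ : Measure α} {f g : α → ℝ}

theorem integral_rpow_mul_rpow_le {a b : ℝ} (ha : 0 ≤ a) (hb : 0 ≤ b) (hab : a + b = 1)
    (hf : 0 ≤ᵐ[μ] f) (hg : 0 ≤ᵐ[μ] g) (hfi : Integrable f μ) (hgi : Integrable g μ) :
    ∫ x, f x ^ a * g x ^ b ∂μ ≤ (∫ x, f x ∂μ) ^ a * (∫ x, g x ∂μ) ^ b := by
  have hF : 0 ≤ ∫ x, f x ∂μ := integral_nonneg_of_ae hf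
  have hG : 0 ≤ ∫ x, g x ∂μ := integral_nonneg_of_ae hg
  have hfg : 0 ≤ᵐ[μ] fun x => f x ^ a * g x ^ b := by
    filter_upwards [hf, hg] with x hfx hgx
    exact mul_nonneg (rpow_nonneg hfx _) (rpow_nonneg hgx _)
  rw [integral_eq_lintegral_of_nonneg_ae hfg
    ((hfi.aemeasurable.pow_const a).mul (hgi.aemeasurable.pow_const b)).aestronglyMeasurable]
  refine ENNReal.toReal_le_of_le_ofReal (by positivity) ?_
  calc ∫⁻ x, ENNReal.ofReal (f x ^ a * g x ^ b) ∂μ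
      = ∫⁻ x, ENNReal.ofReal (f x) ^ a * ENNReal.ofReal (g x) ^ b ∂μ := by
        refine lintegral_congr_ae ?_
        filter_upwards [hf, hg] with x hfx hgx
        rw [ENNReal.ofReal_mul (rpow_nonneg hfx _), ENNReal.ofReal_rpow_of_nonneg hfx ha,
          ENNReal.ofReal_rpow_of_nonneg hgx hb]
    _ ≤ (∫⁻ x, ENNReal.ofReal (f x) ∂μ) ^ a * (∫⁻ x, ENNReal.ofReal (g x) ∂μ) ^ b :=
        ENNReal.lintegral_mul_norm_pow_le hfi.aemeasurable.ennreal_ofReal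
          hgi.aemeasurable.ennreal_ofReal ha hb hab
    _ = ENNReal.ofReal ((∫ x, f x ∂μ) ^ a * (∫ x, g x ∂μ) ^ b) := by
        rw [← ofReal_integral_eq_lintegral_ofReal hfi hf,
          ← ofReal_integral_eq_lintegral_ofReal hgi hg, ENNReal.ofReal_rpow_of_nonneg hF ha,
          ENNReal.ofReal_rpow_of_nonneg hG hb, ENNReal.ofReal_mul (rpow_nonneg hF _)]

theorem integral_rpow_le_integral_mul_rpow_mul {γ : ℝ} (hγ : γ ∈ Ioo (0 : ℝ) 1)
    (hf : 0 ≤ᵐ[μ] f) (hg : ∀ᵐ x ∂μ, 0 < g x) (hfg : Integrable (fun x => f x * g x) μ)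
    (hgi : Integrable (fun x => g x ^ (γ / (γ - 1))) μ) :
    ∫ x, f x ^ γ ∂μ
      ≤ (∫ x, f x * g x ∂μ) ^ γ * (∫ x, g x ^ (γ / (γ - 1)) ∂μ) ^ (1 - γ) := by
  have hexp : γ / (γ - 1) * (1 - γ) = -γ := by
    have : γ - 1 ≠ 0 := (sub_neg.2 hγ.2).ne
    field_simp
    ring
  calc ∫ x, f x ^ γ ∂μ
      = ∫ x, (f x * g x) ^ γ * (g x ^ (γ / (γ - 1))) ^ (1 - γ) ∂μ := by
        refine integral_congr_ae ?_
        filter_upwards [hf, hg] with x hfx hgx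
        rw [mul_rpow hfx hgx.le, ← rpow_mul hgx.le, hexp, mul_assoc, ← rpow_add hgx,
          add_neg_cancel, rpow_zero, mul_one]
    _ ≤ _ := by
        refine integral_rpow_mul_rpow_le hγ.1.le (sub_nonneg.2 hγ.2.le) (by ring) ?_ ?_ hfg hgi
        · filter_upwards [hf, hg] with x hfx hgx using mul_nonneg hfx hgx.le
        · filter_upwards [hg] with x hgx using rpow_nonneg hgx.le _

theorem sq_integral_le_measureReal_mul_integral_sq [IsFiniteMeasure μ] (hf : Integrable f μ)
    (hf2 : Integrable (fun x => f x ^ 2) μ) :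
    (∫ x, f x ∂μ) ^ 2 ≤ μ.real univ * ∫ x, f x ^ 2 ∂μ := by
  rcases eq_zero_or_neZero μ with rfl | hμ
  · simp
  have hpos : 0 < μ.real univ := measureReal_univ_pos
  have jensen := even_two.convexOn_pow.map_average_le (continuous_pow 2).continuousOn
    isClosed_univ (by simp) hf hf2
  simp only [average_eq, smul_eq_mul] at jensen
  field_simp at jensen
  linarith

end MeanInequalities

section Hilbert

variable {H : Type*} [NormedAddCommGroup H]

theorem exists_subseq_tendsto_inner {𝕜 : Type*} [RCLike 𝕜] [InnerProductSpace 𝕜 H]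
    [CompleteSpace H] [TopologicalSpace.SeparableSpace H] {v : ℕ → H} {C : ℝ}
    (hv : ∀ n, ‖v n‖ ≤ C) :
    ∃ (w : H) (φ : ℕ → ℕ), StrictMono φ ∧
      ∀ u, Tendsto (fun n => ⟪v (φ n), u⟫_𝕜) atTop (𝓝 ⟪w, u⟫_𝕜) := by
  let dual := InnerProductSpace.toDual 𝕜 H
  obtain ⟨w', -, φ, hφ, hlim⟩ := WeakDual.isSeqCompact_closedBall 𝕜 H 0 C
    (x := fun n => StrongDual.toWeakDual (dual (v n))) fun n => by simpa [dual] using hv n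
  refine ⟨dual.symm (WeakDual.toStrongDual w'), φ, hφ, fun u => ?_⟩
  have heval : Tendsto (fun n => dual (v (φ n)) u) atTop (𝓝 (w' u)) :=
    ((WeakDual.eval_continuous u).tendsto w').comp hlim
  simpa [dual] using heval

theorem sq_norm_le_liminf_of_tendsto_inner [InnerProductSpace ℝ H] {ι : Type*} {l : Filter ι}
    [l.NeBot] {v : ι → H} {w : H} (hv : IsBoundedUnder (· ≤ ·) l fun i => ‖v i‖ ^ 2)
    (hw : Tendsto (fun i => ⟪v i, w⟫_ℝ) l (𝓝 (‖w‖ ^ 2))) :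
    ‖w‖ ^ 2 ≤ liminf (fun i => ‖v i‖ ^ 2) l := by
  have hlim : Tendsto (fun i => 2 * ⟪v i, w⟫_ℝ - ‖w‖ ^ 2) l (𝓝 (‖w‖ ^ 2)) := by
    convert (hw.const_mul 2).sub_const (‖w‖ ^ 2) using 2
    ring
  calc ‖w‖ ^ 2 = liminf (fun i => 2 * ⟪v i, w⟫_ℝ - ‖w‖ ^ 2) l := hlim.liminf_eq.symm
    _ ≤ liminf (fun i => ‖v i‖ ^ 2) l := by
      refine liminf_le_liminf (.of_forall fun i => ?_) hlim.isBoundedUnder_ge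
        hv.isCoboundedUnder_ge
      linarith [norm_sub_sq_real (v i) w, sq_nonneg ‖v i - w‖]

end Hilbert

section Integral

variable {α : Type*} [MeasurableSpace α] {μ : Measure α}

theorem norm_toLp_sq_eq_integral {f : α → ℝ} (hf : MemLp f 2 μ) :
    ‖hf.toLp f‖ ^ 2 = ∫ x, f x ^ 2 ∂μ := by
  rw [← real_inner_self_eq_norm_sq, L2.inner_def]
  refine integral_congr_ae ?_
  filter_upwards [hf.coeFn_toLp] with x hx
  rw [hx, real_inner_self_eq_norm_sq, norm_eq_abs, sq_abs]

theorem tendsto_integral_comp_of_forall_mem_isCompact [IsFiniteMeasure μ] {X E ι : Type*}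
    [TopologicalSpace X] [T2Space X] [MeasurableSpace X] [NormedAddCommGroup E] [NormedSpace ℝ E]
    {l : Filter ι} [l.NeBot] [l.IsCountablyGenerated] {K : Set X} (hK : IsCompact K)
    {h : X → E} (hm : StronglyMeasurable h) (hc : ContinuousOn h K)
    {u : ι → α → X} {y : α → X} (hu : ∀ i, AEMeasurable (u i) μ)
    (huK : ∀ᵐ x ∂μ, ∀ i, u i x ∈ K) (hlim : ∀ᵐ x ∂μ, Tendsto (fun i => u i x) l (𝓝 (y x))) :
    Tendsto (fun i => ∫ x, h (u i x) ∂μ) l (𝓝 (∫ x, h (y x) ∂μ)) := by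
  obtain ⟨C, hC⟩ := hK.exists_bound_of_continuousOn hc
  refine tendsto_integral_filter_of_dominated_convergence (fun _ => C)
    (.of_forall fun i => (hm.aestronglyMeasurable.comp_aemeasurable (hu i)))
    (.of_forall fun i => ?_) (integrable_const C) ?_
  · filter_upwards [huK] with x hx using hC _ (hx i)
  · filter_upwards [huK, hlim] with x hx hux
    have hyK : y x ∈ K := hK.isClosed.mem_of_tendsto hux (.of_forall hx)
    exact (hc _ hyK).tendsto.comp (tendsto_nhdsWithin_iff.2 ⟨hux, .of_forall hx⟩)

end Integral

theorem intervalIntegrable_of_mem_Icc {f : ℝ → ℝ} {a b c d : ℝ}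
    (hf : IntervalIntegrable f volume a b) (hc : c ∈ Icc a b) (hd : d ∈ Icc a b) :
    IntervalIntegrable f volume c d :=
  hf.mono_set ((uIcc_subset_Icc hc hd).trans Icc_subset_uIcc)

theorem sq_intervalIntegral_le {f : ℝ → ℝ} {a b : ℝ} (hab : a ≤ b)
    (hf : IntervalIntegrable f volume a b)
    (hf2 : IntervalIntegrable (fun t => f t ^ 2) volume a b) :
    (∫ t in a..b, f t) ^ 2 ≤ (b - a) * ∫ t in a..b, f t ^ 2 := by
  rw [intervalIntegrable_iff_integrableOn_Ioc_of_le hab] at hf hf2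
  simp only [intervalIntegral.integral_of_le hab]
  simpa [hab] using sq_integral_le_measureReal_mul_integral_sq hf hf2

theorem intervalIntegral_sq_nonneg {a b : ℝ} (hab : a ≤ b) (f : ℝ → ℝ) :
    0 ≤ ∫ t in a..b, f t ^ 2 :=
  intervalIntegral.integral_nonneg hab fun _ _ => sq_nonneg _

theorem intervalIntegral_mul_sq_nonneg {q : ℝ → ℝ} {a b : ℝ} (hab : a ≤ b)
    (hq : 0 ≤ᵐ[volume.restrict (Icc a b)] q) (y : ℝ → ℝ) : 0 ≤ ∫ t in a..b, q t * y t ^ 2 := by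
  refine intervalIntegral.integral_nonneg_of_ae_restrict hab ?_
  filter_upwards [hq] with t ht using mul_nonneg ht (sq_nonneg _)

theorem intervalIntegral_eq_inner {a b : ℝ} (f : Lp ℝ 2 (volume.restrict (Ioc a b))) {x : ℝ}
    (hx : x ∈ Icc a b) :
    ∫ t in a..x, f t =
      ⟪f, indicatorConstLp 2 (measurableSet_Ioc (a := a) (b := x)) (measure_ne_top _ _) 1⟫_ℝ := by
  rw [real_inner_comm, L2.inner_indicatorConstLp_one, intervalIntegral.integral_of_le hx.1,
    Measure.restrict_restrict_of_subset (Ioc_subset_Ioc_right hx.2)]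

namespace W12

variable {p : (ℝ → ℝ) × (ℝ → ℝ)}

theorem sub_eq_integral (hp : p ∈ W12) {a b : ℝ} (ha : a ∈ Icc (0 : ℝ) 1)
    (hb : b ∈ Icc (0 : ℝ) 1) : p.1 b - p.1 a = ∫ t in a..b, p.2 t := by
  rw [hp.1 b hb, hp.1 a ha, ← intervalIntegral.integral_interval_sub_left
    (intervalIntegrable_of_mem_Icc hp.2.1 unitInterval.zero_mem hb)
    (intervalIntegrable_of_mem_Icc hp.2.1 unitInterval.zero_mem ha)]
  ring

theorem continuousOn (hp : p ∈ W12) : ContinuousOn p.1 (Icc 0 1) := by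
  have hprim := intervalIntegral.continuousOn_primitive_interval' hp.2.1 left_mem_uIcc
  rw [uIcc_of_le zero_le_one] at hprim
  exact (continuousOn_const.add hprim).congr hp.1

theorem intervalIntegrable_fst (hp : p ∈ W12) : IntervalIntegrable p.1 volume 0 1 :=
  (continuousOn hp).intervalIntegrable_of_Icc zero_le_one

theorem intervalIntegrable_sq_fst (hp : p ∈ W12) :
    IntervalIntegrable (fun t => p.1 t ^ 2) volume 0 1 :=
  ((continuousOn hp).pow 2).intervalIntegrable_of_Icc zero_le_one

theorem aemeasurable_fst (hp : p ∈ W12) : AEMeasurable p.1 (volume.restrict (Ioc 0 1)) :=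
  ((continuousOn hp).mono Ioc_subset_Icc_self).aemeasurable measurableSet_Ioc

theorem memLp_snd (hp : p ∈ W12) : MemLp p.2 2 (volume.restrict (Ioc 0 1)) := by
  have h1 := (intervalIntegrable_iff_integrableOn_Ioc_of_le zero_le_one).1 hp.2.1
  have h2 := (intervalIntegrable_iff_integrableOn_Ioc_of_le zero_le_one).1 hp.2.2
  exact (memLp_two_iff_integrable_sq h1.aestronglyMeasurable).2 h2

theorem mem_of_memLp {z : ℝ → ℝ} (hz : MemLp z 2 (volume.restrict (Ioc 0 1))) (c : ℝ) :
    (fun x => c + ∫ t in (0 : ℝ)..x, z t, z) ∈ W12 := by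
  refine ⟨fun x _ => by simp, ?_, ?_⟩ <;>
    rw [intervalIntegrable_iff_integrableOn_Ioc_of_le zero_le_one]
  exacts [hz.integrable one_le_two, hz.integrable_sq]

theorem smul_mem (hp : p ∈ W12) (c : ℝ) : c • p ∈ W12 := by
  refine ⟨fun x hx => ?_, hp.2.1.const_mul c, ?_⟩
  · simp [hp.1 x hx, mul_add]
  · simpa [mul_pow] using hp.2.2.const_mul (c ^ 2)

theorem sq_sub_le (hp : p ∈ W12) {a b : ℝ} (ha : a ∈ Icc (0 : ℝ) 1) (hb : b ∈ Icc (0 : ℝ) 1) :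
    (p.1 b - p.1 a) ^ 2 ≤ |b - a| * ∫ t in (0 : ℝ)..1, p.2 t ^ 2 := by
  wlog hab : a ≤ b generalizing a b
  · rw [sub_sq_comm, abs_sub_comm]
    exact this hb ha (le_of_not_ge hab)
  rw [sub_eq_integral hp ha hb, abs_of_nonneg (sub_nonneg.2 hab)]
  refine (sq_intervalIntegral_le hab (intervalIntegrable_of_mem_Icc hp.2.1 ha hb)
    (intervalIntegrable_of_mem_Icc hp.2.2 ha hb)).trans ?_
  gcongr
  exact intervalIntegral.integral_mono_interval ha.1 hab hb.2
    (.of_forall fun t => sq_nonneg (p.2 t)) hp.2.2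

theorem integral_sq_sub_le (hp : p ∈ W12) {a : ℝ} (ha : a ∈ Icc (0 : ℝ) 1) :
    ∫ x in (0 : ℝ)..1, (p.1 x - p.1 a) ^ 2 ≤ (∫ t in (0 : ℝ)..1, p.2 t ^ 2) / 2 := by
  have hD := intervalIntegral_sq_nonneg zero_le_one p.2
  set D := ∫ t in (0 : ℝ)..1, p.2 t ^ 2
  -- By convexity `|x - a|` lies below its chord over `[0, 1]`, whose mean is `1 / 2` for every `a`.
  have hchord : ∀ x ∈ Icc (0 : ℝ) 1, |x - a| ≤ a + (1 - 2 * a) * x := fun x hx =>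
    abs_le.2 ⟨by nlinarith [ha.1, ha.2, hx.1, hx.2], by nlinarith [ha.1, ha.2, hx.1, hx.2]⟩
  calc ∫ x in (0 : ℝ)..1, (p.1 x - p.1 a) ^ 2
      ≤ ∫ x in (0 : ℝ)..1, (a + (1 - 2 * a) * x) * D := by
        refine intervalIntegral.integral_mono_on zero_le_one ?_
          (by apply Continuous.intervalIntegrable; fun_prop) fun x hx =>
          (sq_sub_le hp ha hx).trans (mul_le_mul_of_nonneg_right (hchord x hx) hD)
        exact ((continuousOn hp).sub continuousOn_const |>.pow 2).intervalIntegrable_of_Icc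
          zero_le_one
    _ = D / 2 := by
        rw [intervalIntegral.integral_mul_const, intervalIntegral.integral_add (by simp)
          (by apply Continuous.intervalIntegrable; fun_prop), intervalIntegral.integral_const_mul,
          integral_id]
        simp only [intervalIntegral.integral_const, smul_eq_mul]
        ring

theorem sq_abs_sub_sqrt_integral_sq_le (hp : p ∈ W12) {a : ℝ} (ha : a ∈ Icc (0 : ℝ) 1) :
    (|p.1 a| - √(∫ x in (0 : ℝ)..1, p.1 x ^ 2)) ^ 2 ≤ (∫ t in (0 : ℝ)..1, p.2 t ^ 2) / 2 := by
  refine le_trans ?_ (integral_sq_sub_le hp ha)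
  have hN := intervalIntegral_sq_nonneg zero_le_one p.1
  have hmean : |∫ x in (0 : ℝ)..1, p.1 x| ≤ √(∫ x in (0 : ℝ)..1, p.1 x ^ 2) :=
    abs_le_sqrt <| by simpa using
      sq_intervalIntegral_le zero_le_one (intervalIntegrable_fst hp) (intervalIntegrable_sq_fst hp)
  have hexpand : ∫ x in (0 : ℝ)..1, (p.1 x - p.1 a) ^ 2 =
      (∫ x in (0 : ℝ)..1, p.1 x ^ 2) - 2 * p.1 a * (∫ x in (0 : ℝ)..1, p.1 x) + p.1 a ^ 2 := by
    have hlin := (intervalIntegrable_fst hp).const_mul (2 * p.1 a)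
    have hquad := (intervalIntegrable_sq_fst hp).sub hlin
    calc ∫ x in (0 : ℝ)..1, (p.1 x - p.1 a) ^ 2
        = ∫ x in (0 : ℝ)..1, (p.1 x ^ 2 - 2 * p.1 a * p.1 x) + p.1 a ^ 2 := by
          congr with x
          ring
      _ = _ := by
          rw [intervalIntegral.integral_add hquad (by simp),
            intervalIntegral.integral_sub (intervalIntegrable_sq_fst hp) hlin]
          simp
  have hcross : p.1 a * (∫ x in (0 : ℝ)..1, p.1 x) ≤ |p.1 a| * √(∫ x in (0 : ℝ)..1, p.1 x ^ 2) :=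
    (le_abs_self _).trans (by rw [abs_mul]; gcongr)
  rw [hexpand, sub_sq, sq_abs, sq_sqrt hN]
  linarith

theorem exists_subseq_tendsto {p : ℕ → (ℝ → ℝ) × (ℝ → ℝ)} (hp : ∀ n, p n ∈ W12) {B C : ℝ}
    (hB : ∀ n, |(p n).1 0| ≤ B) (hC : ∀ n, ∫ t in (0 : ℝ)..1, (p n).2 t ^ 2 ≤ C) :
    ∃ r ∈ W12, ∃ φ : ℕ → ℕ, StrictMono φ ∧
      (∀ x ∈ Icc (0 : ℝ) 1, Tendsto (fun n => (p (φ n)).1 x) atTop (𝓝 (r.1 x))) ∧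
      ∫ t in (0 : ℝ)..1, r.2 t ^ 2 ≤
        liminf (fun n => ∫ t in (0 : ℝ)..1, (p (φ n)).2 t ^ 2) atTop := by
  obtain ⟨c, -, ψ, hψ, hc⟩ := (isCompact_Icc (a := -B) (b := B)).tendsto_subseq
    fun n => abs_le.1 (hB n)
  let v n := (memLp_snd (hp n)).toLp
  have hv : ∀ n, ‖v n‖ ^ 2 = ∫ t in (0 : ℝ)..1, (p n).2 t ^ 2 := fun n => by
    rw [norm_toLp_sq_eq_integral, intervalIntegral.integral_of_le zero_le_one]
  have hvC : ∀ n, ‖v n‖ ^ 2 ≤ C := fun n => (hv n).trans_le (hC n)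
  have : Fact ((2 : ENNReal) ≠ ⊤) := ⟨ENNReal.ofNat_ne_top⟩
  obtain ⟨w, θ, hθ, hw⟩ := exists_subseq_tendsto_inner (𝕜 := ℝ) (v := fun n => v (ψ n))
    fun n => le_sqrt_of_sq_le (hvC _)
  refine ⟨_, mem_of_memLp (Lp.memLp w) c, ψ ∘ θ, hψ.comp hθ, fun x hx => ?_, ?_⟩
  · -- Evaluation at `x` is weakly continuous: pairing with an indicator integrates the derivative.
    have hprim : ∀ n, (p n).1 x = (p n).1 0 + ∫ t in (0 : ℝ)..x, v n t := fun n => by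
      rw [(hp n).1 x hx]
      congr 1
      rw [intervalIntegral.integral_of_le hx.1, intervalIntegral.integral_of_le hx.1]
      exact integral_congr_ae (ae_restrict_of_ae_restrict_of_subset (Ioc_subset_Ioc_right hx.2)
        (memLp_snd (hp n)).coeFn_toLp.symm)
    simp only [Function.comp_apply, hprim, intervalIntegral_eq_inner _ hx]
    exact (hc.comp hθ.tendsto_atTop).add (hw _)
  · have hlsc := sq_norm_le_liminf_of_tendsto_inner (l := atTop) (v := fun n => v (ψ (θ n)))
      (w := w) ⟨C, by simpa using ⟨0, fun n _ => hvC _⟩⟩ (by simpa using hw w)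
    simp only [hv] at hlsc
    rwa [← Lp.toLp_coeFn w (Lp.memLp w), norm_toLp_sq_eq_integral,
      ← intervalIntegral.integral_of_le zero_le_one] at hlsc

theorem tendsto_integral_comp_fst {p : ℕ → (ℝ → ℝ) × (ℝ → ℝ)} (hp : ∀ n, p n ∈ W12) {K : Set ℝ}
    (hK : IsCompact K) (hpK : ∀ n, ∀ x ∈ Icc (0 : ℝ) 1, (p n).1 x ∈ K) {h : ℝ → ℝ}
    (hm : StronglyMeasurable h) (hc : ContinuousOn h K) {y : ℝ → ℝ}
    (hlim : ∀ x ∈ Icc (0 : ℝ) 1, Tendsto (fun n => (p n).1 x) atTop (𝓝 (y x))) :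
    Tendsto (fun n => ∫ x in (0 : ℝ)..1, h ((p n).1 x)) atTop
      (𝓝 (∫ x in (0 : ℝ)..1, h (y x))) := by
  simp only [intervalIntegral.integral_of_le zero_le_one]
  have hIoc := ae_restrict_mem (μ := volume) (measurableSet_Ioc (a := (0 : ℝ)) (b := 1))
  refine tendsto_integral_comp_of_forall_mem_isCompact hK hm hc (fun n => aemeasurable_fst (hp n))
    ?_ ?_ <;> filter_upwards [hIoc] with x hx
  exacts [fun n => hpK n x (Ioc_subset_Icc_self hx), hlim x (Ioc_subset_Icc_self hx)]

theorem intervalIntegrable_mul_sq_fst (hp : p ∈ W12) {q : ℝ → ℝ}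
    (hq : IntervalIntegrable q volume 0 1) :
    IntervalIntegrable (fun t => q t * p.1 t ^ 2) volume 0 1 :=
  hq.mul_continuousOn (by rw [uIcc_of_le zero_le_one]; exact (continuousOn hp).pow 2)

theorem rayleigh_eq (hp : p ∈ W12) {q : ℝ → ℝ} (hq : IntervalIntegrable q volume 0 1) :
    Rayleigh q p = ((∫ t in (0 : ℝ)..1, p.2 t ^ 2) + ∫ t in (0 : ℝ)..1, q t * p.1 t ^ 2) /
      ∫ t in (0 : ℝ)..1, p.1 t ^ 2 := by
  rw [Rayleigh, intervalIntegral.integral_add hp.2.2 (intervalIntegrable_mul_sq_fst hp hq)]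

theorem two_le_rayleigh_of_eq_zero (hp : p ∈ W12) {q : ℝ → ℝ}
    (hq : IntervalIntegrable q volume 0 1) (hq0 : 0 ≤ᵐ[volume.restrict (Icc 0 1)] q)
    (hN : 0 < ∫ t in (0 : ℝ)..1, p.1 t ^ 2) {a : ℝ} (ha : a ∈ Icc (0 : ℝ) 1) (ha0 : p.1 a = 0) :
    2 ≤ Rayleigh q p := by
  have hpoincare := integral_sq_sub_le hp ha
  simp only [ha0, sub_zero] at hpoincare
  rw [rayleigh_eq hp hq, le_div_iff₀ hN]
  linarith [intervalIntegral_mul_sq_nonneg zero_le_one hq0 p.1]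

end W12

theorem rayleigh_neg (q : ℝ → ℝ) (p : (ℝ → ℝ) × (ℝ → ℝ)) : Rayleigh q (-p) = Rayleigh q p := by
  simp [Rayleigh]

theorem lambda1_le_rayleigh {q : ℝ → ℝ} (hq : 0 ≤ᵐ[volume.restrict (Icc 0 1)] q)
    {p : (ℝ → ℝ) × (ℝ → ℝ)} (hp : p ∈ W12) (hN : 0 < ∫ t in (0 : ℝ)..1, p.1 t ^ 2) :
    lambda1 q ≤ Rayleigh q p := by
  refine csInf_le ⟨0, ?_⟩ ⟨p, hp, hN, rfl⟩
  rintro _ ⟨r, -, hr, rfl⟩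
  refine div_nonneg (intervalIntegral.integral_nonneg_of_ae_restrict zero_le_one ?_) hr.le
  filter_upwards [hq] with t ht
  exact add_nonneg (sq_nonneg _) (mul_nonneg ht (sq_nonneg _))

namespace Mset

variable {p : (ℝ → ℝ) × (ℝ → ℝ)}

theorem mem_iff : p ∈ Mset ↔ p ∈ W12 ∧ ∀ x ∈ Icc (0 : ℝ) 1, 0 < p.1 x := by
  refine and_congr_right fun hp => ⟨fun ⟨ζ, hζ, h⟩ x hx => hζ.trans_le (h x hx), fun hpos => ?_⟩
  obtain ⟨a, ha, hmin⟩ := isCompact_Icc.exists_isMinOn (nonempty_Icc.2 zero_le_one)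
    (W12.continuousOn hp)
  exact ⟨p.1 a, hpos a ha, fun x hx => hmin hx⟩

theorem pos (hp : p ∈ Mset) {x : ℝ} (hx : x ∈ Icc (0 : ℝ) 1) : 0 < p.1 x :=
  (mem_iff.1 hp).2 x hx

theorem one_zero_mem : ((1, 0) : (ℝ → ℝ) × (ℝ → ℝ)) ∈ Mset :=
  mem_iff.2 ⟨⟨by simp, .zero, by simp⟩, by simp⟩

theorem smul_mem (hp : p ∈ Mset) {c : ℝ} (hc : 0 < c) : c • p ∈ Mset :=
  mem_iff.2 ⟨W12.smul_mem hp.1 c, fun _ hx => mul_pos hc (pos hp hx)⟩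

theorem intervalIntegrable_rpow (hp : p ∈ Mset) (e : ℝ) :
    IntervalIntegrable (fun t => p.1 t ^ e) volume 0 1 :=
  ((W12.continuousOn hp.1).rpow_const fun _ hx => .inl (pos hp hx).ne').intervalIntegrable_of_Icc
    zero_le_one

theorem integral_rpow_pos (hp : p ∈ Mset) (e : ℝ) : 0 < ∫ t in (0 : ℝ)..1, p.1 t ^ e :=
  intervalIntegral.intervalIntegral_pos_of_pos_on (intervalIntegrable_rpow hp e)
    (fun _ hx => rpow_pos_of_pos (pos hp (Ioo_subset_Icc_self hx)) e) zero_lt_one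

theorem integral_sq_pos (hp : p ∈ Mset) : 0 < ∫ t in (0 : ℝ)..1, p.1 t ^ 2 := by
  exact_mod_cast integral_rpow_pos hp 2

theorem mem_Icc_of_integral_sq_eq_one (hp : p ∈ Mset) (hN : ∫ t in (0 : ℝ)..1, p.1 t ^ 2 = 1)
    {δ : ℝ} (hδ : 0 ≤ δ) (hD : ∫ t in (0 : ℝ)..1, p.2 t ^ 2 ≤ 2 * δ ^ 2) {x : ℝ}
    (hx : x ∈ Icc (0 : ℝ) 1) : p.1 x ∈ Icc (1 - δ) (1 + δ) := by
  have hosc := W12.sq_abs_sub_sqrt_integral_sq_le hp.1 hx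
  rw [hN, sqrt_one, abs_of_pos (pos hp hx)] at hosc
  have hdist : |p.1 x - 1| ≤ δ := abs_le_of_sq_le_sq (by linarith) hδ
  constructor <;> linarith [abs_le.1 hdist]

theorem jg_smul {γ : ℝ} (hγ0 : γ ≠ 0) (hγ1 : γ ≠ 1) (hp : p ∈ Mset) {c : ℝ} (hc : 0 ≤ c) :
    Jg γ (c • p) = c ^ 2 * Jg γ p := by
  have hexp : 2 * γ / (γ - 1) * ((γ - 1) / γ) = 2 := by
    have := sub_ne_zero.2 hγ1
    field_simp
  have hpow : ∫ t in (0 : ℝ)..1, (c * p.1 t) ^ (2 * γ / (γ - 1)) =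
      c ^ (2 * γ / (γ - 1)) * ∫ t in (0 : ℝ)..1, p.1 t ^ (2 * γ / (γ - 1)) := by
    rw [← intervalIntegral.integral_const_mul]
    refine intervalIntegral.integral_congr fun x hx => ?_
    rw [uIcc_of_le zero_le_one] at hx
    exact mul_rpow hc (pos hp hx).le
  simp only [Jg, Prod.smul_fst, Prod.smul_snd, Pi.smul_apply, smul_eq_mul, mul_pow,
    intervalIntegral.integral_const_mul, hpow]
  rw [mul_rpow (by positivity) (integral_rpow_pos hp _).le, ← rpow_mul hc, hexp, rpow_two]
  ring

theorem exists_integral_sq_eq_one_and_jg_eq_gg {γ : ℝ} (hγ0 : γ ≠ 0) (hγ1 : γ ≠ 1)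
    (hp : p ∈ Mset) : ∃ r ∈ Mset, ∫ t in (0 : ℝ)..1, r.1 t ^ 2 = 1 ∧ Jg γ r = Gg γ p := by
  have hN := integral_sq_pos hp
  set N := ∫ t in (0 : ℝ)..1, p.1 t ^ 2 with hNdef
  have hc : 0 < (√N)⁻¹ := by positivity
  have hc2 : (√N)⁻¹ ^ 2 = N⁻¹ := by rw [inv_pow, sq_sqrt hN.le]
  refine ⟨(√N)⁻¹ • p, smul_mem hp hc, ?_, ?_⟩
  · simp only [Prod.smul_fst, Pi.smul_apply, smul_eq_mul, mul_pow,
      intervalIntegral.integral_const_mul, hc2, ← hNdef]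
    exact inv_mul_cancel₀ hN.ne'
  · rw [jg_smul hγ0 hγ1 hp hc.le, hc2, Gg, ← hNdef, inv_mul_eq_div]

theorem integral_sq_snd_le_jg (γ : ℝ) (hp : p ∈ Mset) : ∫ t in (0 : ℝ)..1, p.2 t ^ 2 ≤ Jg γ p :=
  le_add_of_nonneg_right (rpow_nonneg (integral_rpow_pos hp _).le _)

theorem gg_nonneg (γ : ℝ) (hp : p ∈ Mset) : 0 ≤ Gg γ p :=
  div_nonneg ((intervalIntegral_sq_nonneg zero_le_one p.2).trans (integral_sq_snd_le_jg γ hp))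
    (integral_sq_pos hp).le

theorem bddBelow_gg (γ : ℝ) : BddBelow (Gg γ '' Mset) :=
  ⟨0, forall_mem_image.2 fun _ hr => gg_nonneg γ hr⟩

theorem sInf_gg_le (γ : ℝ) (hp : p ∈ Mset) : sInf (Gg γ '' Mset) ≤ Gg γ p :=
  csInf_le (bddBelow_gg γ) (mem_image_of_mem _ hp)

end Mset

/-- The potential attaining equality in the reverse Hölder inequality against `y ^ 2`, scaled so
that its `γ`-th power has integral `1`. -/
def dualPotential (γ : ℝ) (y : ℝ → ℝ) (x : ℝ) : ℝ :=
  (∫ t in (0 : ℝ)..1, y t ^ (2 * γ / (γ - 1))) ^ (-1 / γ) * y x ^ (2 / (γ - 1))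

section Duality

variable {γ : ℝ} {p : (ℝ → ℝ) × (ℝ → ℝ)} {q : ℝ → ℝ}

theorem dualPotential_mem_agamma (hγ : γ ≠ 0) (hp : p ∈ Mset) :
    dualPotential γ p.1 ∈ Agamma γ := by
  have hI := Mset.integral_rpow_pos hp (2 * γ / (γ - 1))
  set I := ∫ t in (0 : ℝ)..1, p.1 t ^ (2 * γ / (γ - 1)) with hIdef
  have hpow : ∀ x ∈ uIcc (0 : ℝ) 1,
      dualPotential γ p.1 x ^ γ = I⁻¹ * p.1 x ^ (2 * γ / (γ - 1)) := by
    intro x hx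
    rw [uIcc_of_le zero_le_one] at hx
    have hpx := (Mset.pos hp hx).le
    rw [dualPotential, mul_rpow (rpow_nonneg hI.le _) (rpow_nonneg hpx _), ← rpow_mul hI.le,
      ← rpow_mul hpx, div_mul_cancel₀ _ hγ, rpow_neg_one, div_mul_eq_mul_div]
  refine ⟨(Mset.intervalIntegrable_rpow hp _).const_mul _, ?_, ?_⟩
  · filter_upwards [ae_restrict_mem measurableSet_Icc] with x hx
    exact mul_nonneg (rpow_nonneg hI.le _) (rpow_nonneg (Mset.pos hp hx).le _)
  · rw [intervalIntegral.integral_congr hpow, intervalIntegral.integral_const_mul, ← hIdef,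
      inv_mul_cancel₀ hI.ne']

theorem integral_dualPotential_mul_sq (hγ0 : γ ≠ 0) (hγ1 : γ ≠ 1) (hp : p ∈ Mset) :
    ∫ t in (0 : ℝ)..1, dualPotential γ p.1 t * p.1 t ^ 2 =
      (∫ t in (0 : ℝ)..1, p.1 t ^ (2 * γ / (γ - 1))) ^ ((γ - 1) / γ) := by
  have hsub := sub_ne_zero.2 hγ1
  have hI := Mset.integral_rpow_pos hp (2 * γ / (γ - 1))
  set I := ∫ t in (0 : ℝ)..1, p.1 t ^ (2 * γ / (γ - 1)) with hIdef
  have hmul : ∀ x ∈ uIcc (0 : ℝ) 1, dualPotential γ p.1 x * p.1 x ^ 2 =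
      I ^ (-1 / γ) * p.1 x ^ (2 * γ / (γ - 1)) := by
    intro x hx
    rw [uIcc_of_le zero_le_one] at hx
    rw [dualPotential, mul_assoc, ← rpow_two, ← rpow_add (Mset.pos hp hx)]
    congr 2
    field_simp
    ring
  rw [intervalIntegral.integral_congr hmul, intervalIntegral.integral_const_mul, ← hIdef,
    ← rpow_add_one hI.ne']
  congr 1
  field_simp
  ring

theorem rayleigh_dualPotential (hγ0 : γ ≠ 0) (hγ1 : γ ≠ 1) (hp : p ∈ Mset) :
    Rayleigh (dualPotential γ p.1) p = Gg γ p := by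
  rw [W12.rayleigh_eq hp.1 (dualPotential_mem_agamma hγ0 hp).1,
    integral_dualPotential_mul_sq hγ0 hγ1 hp, Gg, Jg]

theorem rpow_integral_rpow_le_integral_mul_sq (hγ : γ ∈ Ioo (0 : ℝ) 1) (hp : p ∈ Mset)
    (hq : q ∈ Agamma γ) :
    (∫ t in (0 : ℝ)..1, p.1 t ^ (2 * γ / (γ - 1))) ^ ((γ - 1) / γ) ≤
      ∫ t in (0 : ℝ)..1, q t * p.1 t ^ 2 := by
  have hI := Mset.integral_rpow_pos hp (2 * γ / (γ - 1))
  have hQ := intervalIntegral_mul_sq_nonneg zero_le_one hq.2.1 p.1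
  have hpos : ∀ x ∈ Ioc (0 : ℝ) 1, 0 < p.1 x := fun x hx => Mset.pos hp (Ioc_subset_Icc_self hx)
  have hsq : ∀ x ∈ Ioc (0 : ℝ) 1, (p.1 x ^ 2) ^ (γ / (γ - 1)) = p.1 x ^ (2 * γ / (γ - 1)) :=
    fun x hx => by rw [← rpow_two, ← rpow_mul (hpos x hx).le, mul_div_assoc]
  have hpow := (intervalIntegrable_iff_integrableOn_Ioc_of_le zero_le_one).1
    (Mset.intervalIntegrable_rpow hp (2 * γ / (γ - 1)))
  have hholder := integral_rpow_le_integral_mul_rpow_mul hγ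
    (ae_restrict_of_ae_restrict_of_subset Ioc_subset_Icc_self hq.2.1)
    ((ae_restrict_mem measurableSet_Ioc).mono fun x hx => pow_pos (hpos x hx) 2)
    ((intervalIntegrable_iff_integrableOn_Ioc_of_le zero_le_one).1
      (W12.intervalIntegrable_mul_sq_fst hp.1 hq.1))
    (hpow.congr_fun (fun x hx => (hsq x hx).symm) measurableSet_Ioc)
  rw [setIntegral_congr_fun measurableSet_Ioc hsq] at hholder
  simp only [← intervalIntegral.integral_of_le zero_le_one, hq.2.2] at hholder
  set I := ∫ t in (0 : ℝ)..1, p.1 t ^ (2 * γ / (γ - 1))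
  rw [div_eq_mul_inv (γ - 1), rpow_mul hI.le, rpow_inv_le_iff_of_pos (rpow_nonneg hI.le _) hQ hγ.1,
    ← neg_sub 1 γ, rpow_neg hI.le, inv_le_iff_one_le_mul₀ (rpow_pos_of_pos hI _)]
  exact hholder

theorem gg_le_rayleigh (hγ : γ ∈ Ioo (0 : ℝ) 1) (hp : p ∈ Mset) (hq : q ∈ Agamma γ) :
    Gg γ p ≤ Rayleigh q p := by
  have hN := Mset.integral_sq_pos hp
  rw [W12.rayleigh_eq hp.1 hq.1, Gg, Jg]
  gcongr
  exact rpow_integral_rpow_le_integral_mul_sq hγ hp hq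

end Duality

section Minimizer

variable {γ : ℝ}

theorem gg_one_zero (γ : ℝ) : Gg γ (1, 0) = 1 := by
  simp [Gg, Jg]

theorem exists_normalized_seq_tendsto_sInf_gg (hγ0 : γ ≠ 0) (hγ1 : γ ≠ 1) {C : ℝ} (hC : 1 < C) :
    ∃ p : ℕ → (ℝ → ℝ) × (ℝ → ℝ), (∀ n, p n ∈ Mset) ∧
      (∀ n, ∫ t in (0 : ℝ)..1, (p n).1 t ^ 2 = 1) ∧
      (∀ n, ∫ t in (0 : ℝ)..1, (p n).2 t ^ 2 ≤ C) ∧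
      Tendsto (fun n => Jg γ (p n)) atTop (𝓝 (sInf (Gg γ '' Mset))) := by
  obtain ⟨u, -, hu, hmem⟩ := exists_seq_tendsto_sInf
    (Set.Nonempty.image (Gg γ) ⟨_, Mset.one_zero_mem⟩) (Mset.bddBelow_gg γ)
  have hnorm : ∀ n, ∃ r ∈ Mset, ∫ t in (0 : ℝ)..1, r.1 t ^ 2 = 1 ∧ Jg γ r = u n := fun n => by
    obtain ⟨p, hp, hpu⟩ := hmem n
    exact hpu ▸ Mset.exists_integral_sq_eq_one_and_jg_eq_gg hγ0 hγ1 hp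
  choose p hp hN hJ using hnorm
  have hinf : sInf (Gg γ '' Mset) < C :=
    ((Mset.sInf_gg_le γ Mset.one_zero_mem).trans_eq (gg_one_zero γ)).trans_lt hC
  obtain ⟨n₀, hn₀⟩ := eventually_atTop.1 (hu.eventually_le_const hinf)
  refine ⟨fun n => p (n + n₀), fun n => hp _, fun n => hN _, fun n => ?_, ?_⟩
  · exact (Mset.integral_sq_snd_le_jg γ (hp _)).trans
      ((hJ _).trans_le (hn₀ _ (Nat.le_add_left _ _)))
  · simpa only [hJ, Function.comp_def] using hu.comp (tendsto_add_atTop_nat n₀)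

theorem jg_le_of_tendsto {p : ℕ → (ℝ → ℝ) × (ℝ → ℝ)} {r : (ℝ → ℝ) × (ℝ → ℝ)} {a b m : ℝ}
    (hp : ∀ n, p n ∈ W12) (hr : r ∈ Mset) (ha : 0 < a)
    (hab : ∀ n, ∀ x ∈ Icc (0 : ℝ) 1, (p n).1 x ∈ Icc a b)
    (hlim : ∀ x ∈ Icc (0 : ℝ) 1, Tendsto (fun n => (p n).1 x) atTop (𝓝 (r.1 x)))
    (hlsc : ∫ t in (0 : ℝ)..1, r.2 t ^ 2 ≤
      liminf (fun n => ∫ t in (0 : ℝ)..1, (p n).2 t ^ 2) atTop)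
    (hm : Tendsto (fun n => Jg γ (p n)) atTop (𝓝 m)) : Jg γ r ≤ m := by
  have hI : Tendsto (fun n => ∫ t in (0 : ℝ)..1, (p n).1 t ^ (2 * γ / (γ - 1))) atTop
      (𝓝 (∫ t in (0 : ℝ)..1, r.1 t ^ (2 * γ / (γ - 1)))) :=
    W12.tendsto_integral_comp_fst hp isCompact_Icc hab
      (measurable_id.pow_const _).stronglyMeasurable
      (continuousOn_id.rpow_const fun x hx => .inl (ha.trans_le hx.1).ne') hlim
  have hD := hm.sub (hI.rpow_const (p := (γ - 1) / γ) (.inl (Mset.integral_rpow_pos hr _).ne'))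
  simp only [Jg, add_sub_cancel_right] at hD
  rw [hD.liminf_eq] at hlsc
  exact le_sub_iff_add_le.1 hlsc

theorem exists_isMinOn_gg (hγ0 : γ ≠ 0) (hγ1 : γ ≠ 1) :
    ∃ r ∈ Mset, IsMinOn (Gg γ) Mset r := by
  -- The infimum is at most `1`, so `1 < 2 * δ ^ 2` confines a minimising sequence to
  -- `[1 - δ, 1 + δ]`, which `δ < 1` keeps away from zero.
  obtain ⟨δ, hδ, hδ0, hδ1⟩ : ∃ δ : ℝ, 1 < 2 * δ ^ 2 ∧ 0 ≤ δ ∧ δ < 1 := ⟨4 / 5, by norm_num⟩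
  obtain ⟨p, hp, hN, hD, hJ⟩ := exists_normalized_seq_tendsto_sInf_gg hγ0 hγ1 hδ
  have hab : ∀ n, ∀ x ∈ Icc (0 : ℝ) 1, (p n).1 x ∈ Icc (1 - δ) (1 + δ) := fun n x hx =>
    Mset.mem_Icc_of_integral_sq_eq_one (hp n) (hN n) hδ0 (hD n) hx
  have hp0 : ∀ n, |(p n).1 0| ≤ 1 + δ := fun n =>
    (abs_of_pos (Mset.pos (hp n) unitInterval.zero_mem)).trans_le
      (hab n 0 unitInterval.zero_mem).2
  obtain ⟨r, hr, φ, hφ, hlim, hlsc⟩ := W12.exists_subseq_tendsto (fun n => (hp n).1) hp0 hD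
  have hrM : r ∈ Mset := Mset.mem_iff.2 ⟨hr, fun x hx => (sub_pos.2 hδ1).trans_le
    (ge_of_tendsto' (hlim x hx) fun n => (hab (φ n) x hx).1)⟩
  have hNr : ∫ t in (0 : ℝ)..1, r.1 t ^ 2 = 1 := by
    have hNlim := W12.tendsto_integral_comp_fst (h := (· ^ 2)) (fun n => (hp (φ n)).1) isCompact_Icc
      (fun n => hab (φ n)) (by fun_prop) (by fun_prop) hlim
    simp only [hN] at hNlim
    exact tendsto_nhds_unique hNlim tendsto_const_nhds
  have hJr : Jg γ r ≤ sInf (Gg γ '' Mset) :=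
    jg_le_of_tendsto (fun n => (hp (φ n)).1) hrM (sub_pos.2 hδ1) (fun n => hab (φ n)) hlim hlsc
      (hJ.comp hφ.tendsto_atTop)
  refine ⟨r, hrM, fun s hs => ?_⟩
  calc Gg γ r = Jg γ r := by rw [Gg, hNr, div_one]
    _ ≤ Gg γ s := hJr.trans (Mset.sInf_gg_le γ hs)

theorem gg_le_rayleigh_of_isMinOn (hγ : γ ∈ Ioo (0 : ℝ) 1) {p r : (ℝ → ℝ) × (ℝ → ℝ)}
    (hr : IsMinOn (Gg γ) Mset r) {q : ℝ → ℝ} (hq : q ∈ Agamma γ) (hp : p ∈ W12)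
    (hN : 0 < ∫ t in (0 : ℝ)..1, p.1 t ^ 2) : Gg γ r ≤ Rayleigh q p := by
  by_cases hzero : ∃ a ∈ Icc (0 : ℝ) 1, p.1 a = 0
  · obtain ⟨a, ha, ha0⟩ := hzero
    calc Gg γ r ≤ Gg γ (1, 0) := hr Mset.one_zero_mem
      _ ≤ 2 := (gg_one_zero γ).trans_le one_le_two
      _ ≤ Rayleigh q p := W12.two_le_rayleigh_of_eq_zero hp hq.1 hq.2.1 hN ha ha0
  push Not at hzero
  have hpos : ∀ s ∈ Mset, Gg γ r ≤ Rayleigh q s := fun s hs =>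
    (hr hs).trans (gg_le_rayleigh hγ hs hq)
  rcases forall_pos_or_forall_neg_of_isPreconnected isPreconnected_Icc (W12.continuousOn hp) hzero
    with h | h
  · exact hpos p (Mset.mem_iff.2 ⟨hp, h⟩)
  · rw [← rayleigh_neg]
    exact hpos (-p) (Mset.mem_iff.2
      ⟨by simpa using W12.smul_mem hp (-1), fun x hx => neg_pos.2 (h x hx)⟩)

theorem gg_le_lambda1_of_isMinOn (hγ : γ ∈ Ioo (0 : ℝ) 1) {r : (ℝ → ℝ) × (ℝ → ℝ)}
    (hr : IsMinOn (Gg γ) Mset r) {q : ℝ → ℝ} (hq : q ∈ Agamma γ) : Gg γ r ≤ lambda1 q := by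
  refine le_csInf ⟨_, (1, 0), Mset.one_zero_mem.1, Mset.integral_sq_pos Mset.one_zero_mem, rfl⟩ ?_
  rintro _ ⟨p, hp, hN, rfl⟩
  exact gg_le_rayleigh_of_isMinOn hγ hr hq hp hN

end Minimizer

/-- For every `γ ∈ (0,1)` the infimum `m_γ` of the first eigenvalues `λ₁(q)`
over `q ∈ A_γ` is attained at some `q* ∈ A_γ`. -/
theorem attained_inf (γ : ℝ) (hγ : γ ∈ Ioo (0:ℝ) 1) :
    ∃ qstar ∈ Agamma γ, lambda1 qstar = mGamma γ := by
  obtain ⟨r, hr, hmin⟩ := exists_isMinOn_gg hγ.1.ne' hγ.2.ne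
  have hq := dualPotential_mem_agamma hγ.1.ne' hr
  have hle : lambda1 (dualPotential γ r.1) ≤ Gg γ r :=
    (lambda1_le_rayleigh hq.2.1 hr.1 (Mset.integral_sq_pos hr)).trans_eq
      (rayleigh_dualPotential hγ.1.ne' hγ.2.ne hr)
  have hleast : IsLeast (lambda1 '' Agamma γ) (lambda1 (dualPotential γ r.1)) :=
    ⟨mem_image_of_mem _ hq, forall_mem_image.2 fun _ hq' =>
      hle.trans (gg_le_lambda1_of_isMinOn hγ hmin hq')⟩
  exact ⟨_, hq, hleast.csInf_eq.symm⟩
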